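/- arXiv:1008.5029 — 2 statements merged into one kernel-verified Lean document; each statement's English description precedes it below -/
import Mathlib

section
/- Hall-interval structure of all-different solutions: let V be a finite set of variables, dom(v) a nonempty finite set of integers for each v ∈ V, and f : V → ℤ an injective function with f(v) ∈ dom(v) for all v ∈ V. Let l ≤ u be integers such that [l,u] is a Hall interval, i.e., the set H = {v ∈ V : dom(v) ⊆ [l,u]} satisfies |H| = u − l + 1. Then f restricted to H is a bijection from H onto the set of integers in [l,u], and f(v) ∉ [l,u] for every v ∈ V \ H. -/
theorem bijOn_of_mapsTo_of_injOn_of_ncard_le {α β : Type*} {f : α → β} {s : Set α} {t : Set β}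
    (hmaps : Set.MapsTo f s t) (hinj : Set.InjOn f s) (ht : t.Finite)
    (hcard : t.ncard ≤ s.ncard) : Set.BijOn f s t := by
  have himage : f '' s = t :=
    Set.eq_of_subset_of_ncard_le hmaps.image_subset (by rwa [hinj.ncard_image]) ht
  exact himage ▸ hinj.bijOn_image

theorem ncard_Icc_int (l u : ℤ) : (Set.Icc l u).ncard = (u + 1 - l).toNat := by
  rw [← Finset.coe_Icc, Set.ncard_coe_finset, Int.card_Icc]

theorem hall_interval_structure_general {V α : Type*} (dom : V → Set α)
    (f : V → α) (hinj : Function.Injective f) (hmem : ∀ v, f v ∈ dom v)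
    {S : Set α} (hS : S.Finite) (hHall : S.ncard ≤ {v | dom v ⊆ S}.ncard) :
    Set.BijOn f {v | dom v ⊆ S} S ∧ ∀ v, ¬ dom v ⊆ S → f v ∉ S := by
  have hmaps : Set.MapsTo f {v | dom v ⊆ S} S := fun v hv ↦ hv (hmem v)
  have hbij : Set.BijOn f {v | dom v ⊆ S} S :=
    bijOn_of_mapsTo_of_injOn_of_ncard_le hmaps hinj.injOn hS hHall
  refine ⟨hbij, fun v hv ↦ ?_⟩
  rwa [← hbij.image_eq, hinj.mem_set_image]

/-- **Hall-interval structure of all-different solutions.**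
`V` is a finite set of variables, `dom v` a nonempty finite set of integers for each `v`,
and `f` an injective assignment with `f v ∈ dom v`.  If `[l,u]` is a Hall interval, i.e.
the set `H = {v | dom v ⊆ [l,u]}` has exactly `u - l + 1` elements, then `f` restricted to
`H` is a bijection from `H` onto the integers in `[l,u]`, and `f v ∉ [l,u]` for `v ∉ H`. -/
theorem hall_interval_structure {V : Type} [Fintype V]
    (dom : V → Finset ℤ) (hne : ∀ v, (dom v).Nonempty)
    (f : V → ℤ) (hinj : Function.Injective f) (hmem : ∀ v, f v ∈ dom v)
    (l u : ℤ) (hlu : l ≤ u)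
    (hHall : (({v : V | (dom v : Set ℤ) ⊆ Set.Icc l u}).ncard : ℤ) = u - l + 1) :
    Set.BijOn f {v : V | (dom v : Set ℤ) ⊆ Set.Icc l u} (Set.Icc l u) ∧
      ∀ v : V, ¬ (dom v : Set ℤ) ⊆ Set.Icc l u → f v ∉ Set.Icc l u :=
  hall_interval_structure_general (fun v ↦ (dom v : Set ℤ)) f hinj hmem
    (Set.finite_Icc l u) (by rw [ncard_Icc_int]; omega)
end

section
/- Correctness of the counting-ladder translation of cardinality constraints: let a_1,…,a_n be Booleans and k ≥ 1, and define l(i,j) for 1 ≤ i ≤ n+1 and 0 ≤ j ≤ k by l(i,0) = true for all i, l(n+1,j) = false for all j ≥ 1, and l(i,j) = l(i+1,j) ∨ (a_i ∧ l(i+1,j−1)) for 1 ≤ i ≤ n and 1 ≤ j ≤ k. Then for all 1 ≤ i ≤ n+1 and 0 ≤ j ≤ k, l(i,j) is true if and only if at least j of the Booleans a_i, a_{i+1}, …, a_n are true; in particular, l(1,k) is true if and only if |{m : 1 ≤ m ≤ n, a_m = true}| ≥ k. -/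
/-!
Each row `l i` of the ladder writes the number of true Booleans among `a i, …, a n` in unary,
truncated at `k`. The recurrence is addition of the bit `a i` in this encoding: for `j ≥ 1`,
`j ≤ c + b` holds iff `j ≤ c`, or `b = 1` and `j - 1 ≤ c`. Hence the encoding propagates from the
empty row `l (n + 1)` down to `l 1`.
-/

/-- The sequence `r` is the unary (order) encoding of `c` truncated at `k`: its entry `r j` is the
truth value of `j ≤ c`, for thresholds `j ≤ k`. Entries beyond `k` are unconstrained, so `c` itself
may exceed `k`. It is the invariant satisfied by the rows of a counting ladder. -/
def IsUnaryEncoding (k c : ℕ) (r : ℕ → Bool) : Prop :=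
  ∀ j ≤ k, r j = true ↔ j ≤ c

namespace IsUnaryEncoding

variable {k c : ℕ} {r r' : ℕ → Bool}

theorem zero (h_zero : r 0 = true) (h_pos : ∀ j, 1 ≤ j → j ≤ k → r j = false) :
    IsUnaryEncoding k 0 r := by
  intro j hj
  obtain rfl | hj_pos := j.eq_zero_or_pos
  · simp [h_zero]
  · simp [h_pos j hj_pos hj, hj_pos.ne']

theorem add_toNat (h : IsUnaryEncoding k c r) (b : Bool) (h_zero : r' 0 = true)
    (h_succ : ∀ j < k, r' (j + 1) = (r (j + 1) || (b && r j))) :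
    IsUnaryEncoding k (c + b.toNat) r' := by
  intro j hj
  cases j with
  | zero => simp [h_zero]
  | succ j =>
    rw [h_succ j hj, Bool.or_eq_true, Bool.and_eq_true, h (j + 1) hj, h j (by lia)]
    cases b
    · simp
    · simp only [true_and, Bool.toNat_true]
      lia

end IsUnaryEncoding

theorem card_filter_insert_eq_add_toNat {α : Type*} [DecidableEq α] {s : Finset α} {x : α}
    (hx : x ∉ s) (a : α → Bool) :
    ((insert x s).filter (fun m => a m = true)).card =
      (s.filter (fun m => a m = true)).card + (a x).toNat := by
  cases hax : a x <;> simp [Finset.filter_insert, hax, hx]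

/-- **Correctness of the counting-ladder translation of cardinality constraints.**
Given Booleans `a 1, …, a n` and `k ≥ 1`, let `l i j` (for `1 ≤ i ≤ n+1`, `0 ≤ j ≤ k`) satisfy
`l i 0 = true`, `l (n+1) j = false` for `j ≥ 1`, and
`l i j = l (i+1) j ∨ (a i ∧ l (i+1) (j-1))`.  Then `l i j` is true iff at least `j` of the
Booleans `a i, …, a n` are true; in particular `l 1 k` is true iff at least `k` of
`a 1, …, a n` are true. -/
theorem counting_ladder_correct (n k : ℕ) (hk : 1 ≤ k) (a : ℕ → Bool) (l : ℕ → ℕ → Bool)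
    (h0 : ∀ i, 1 ≤ i → i ≤ n + 1 → l i 0 = true)
    (htop : ∀ j, 1 ≤ j → j ≤ k → l (n + 1) j = false)
    (hrec : ∀ i j, 1 ≤ i → i ≤ n → 1 ≤ j → j ≤ k →
      l i j = (l (i + 1) j || (a i && l (i + 1) (j - 1)))) :
    (∀ i j, 1 ≤ i → i ≤ n + 1 → j ≤ k →
      (l i j = true ↔ j ≤ ((Finset.Icc i n).filter (fun m => a m = true)).card)) ∧
    (l 1 k = true ↔ k ≤ ((Finset.Icc 1 n).filter (fun m => a m = true)).card) := by
  have row_encodes : ∀ i, 1 ≤ i → i ≤ n + 1 →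
      IsUnaryEncoding k ((Finset.Icc i n).filter (fun m => a m = true)).card (l i) := by
    intro i hi hin
    induction hin using Nat.decreasingInduction with
    | self => simpa using IsUnaryEncoding.zero (h0 (n + 1) hi le_rfl) htop
    | of_succ i hin ih =>
      have hi_le : i ≤ n := Nat.lt_succ_iff.mp hin
      rw [← Finset.insert_Icc_add_one_left_eq_Icc hi_le,
        card_filter_insert_eq_add_toNat (by simp) a]
      exact (ih (by lia)).add_toNat (a i) (h0 i hi hin.le)
        fun j hj ↦ hrec i (j + 1) hi hi_le (by lia) hj
  exact ⟨fun i j hi hin hj ↦ row_encodes i hi hin j hj,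
    row_encodes 1 le_rfl (by lia) k le_rfl⟩
end
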